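/- For every finite connected simple graph G = (V,E), the extension complexity of the spanning tree polytope of G is O(|V|·|E|). Precisely, there exists a universal constant C > 0 such that for every finite connected simple graph G = (V,E) one has xc(STP(G)) ≤ C·|V|·|E|. -/

import Mathlib

/-- `P ⊆ ℝ^ι` admits an extended formulation with `m` inequalities: a linear system
`A x + B y ≤ b`, `C x + D y = c` (with `k` extra variables `y` and `p` equalities)
whose projection to the `x`-variables is exactly `P`. -/
def IsExtFormulation {ι : Type} [Fintype ι] (P : Set (ι → ℝ)) (m : ℕ) : Prop :=
  ∃ (k p : ℕ) (A : Matrix (Fin m) ι ℝ) (B : Matrix (Fin m) (Fin k) ℝ) (b : Fin m → ℝ)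
    (C : Matrix (Fin p) ι ℝ) (D : Matrix (Fin p) (Fin k) ℝ) (c : Fin p → ℝ),
    P = {x : ι → ℝ | ∃ y : Fin k → ℝ,
      (∀ i, A.mulVec x i + B.mulVec y i ≤ b i) ∧
      (∀ j, C.mulVec x j + D.mulVec y j = c j)}

/-- The extension complexity of `P`: the minimum number of inequalities
in an extended formulation of `P`. -/
noncomputable def xc {ι : Type} [Fintype ι] (P : Set (ι → ℝ)) : ℕ :=
  sInf {m | IsExtFormulation P m}

/-- `T` is the edge set of a spanning tree of `G`: `T` consists of edges of `G` and
the graph on `V` with edge set `T` is a tree (connected and acyclic). -/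
def IsSpanningTreeEdgeSet {V : Type} (G : SimpleGraph V) (T : Set (Sym2 V)) : Prop :=
  T ⊆ G.edgeSet ∧ (SimpleGraph.fromEdgeSet T).IsTree

/-- The spanning tree polytope of `G`: the convex hull in `ℝ^E` of the characteristic
vectors of edge sets of spanning trees of `G`. -/
noncomputable def stp {V : Type} (G : SimpleGraph V) : Set (↥G.edgeSet → ℝ) :=
  convexHull ℝ {x | ∃ T : Set (Sym2 V), IsSpanningTreeEdgeSet G T ∧
    x = fun e : ↥G.edgeSet => T.indicator 1 (e : Sym2 V)}

/-!
The spanning trees of a connected graph are the bases of its cycle matroid, so by Edmonds' theorem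
`stp G` is cut out by `x(E) = |V| - 1` and the rank inequalities `x(A) ≤ r(A)`. Martin's system
has only `2 |V| |E|` inequalities: for each root `k` it splits `x` into weights `z k` on the darts
such that every vertex `v ≠ k` emits total weight one. A spanning tree solves it by orienting the
edges towards `k`. Conversely, let `ρ v` be a representative of the component of `v` in `(V, A)`.
Both ends of an edge in `A` have the same representative, so `x(A)` is at most the sum over all
vertices `v` of the weight that `v` emits towards the root `ρ v`, which is the number `r(A)` of
vertices with `ρ v ≠ v`.
-/

open Finset SimpleGraph

section ExtFormulation

variable {ι : Type} [Fintype ι] {P : Set (ι → ℝ)} {m : ℕ}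

theorem xc_le_of_isExtFormulation (h : IsExtFormulation P m) : xc P ≤ m :=
  Nat.sInf_le h

theorem convex_of_isExtFormulation (h : IsExtFormulation P m) : Convex ℝ P := by
  obtain ⟨k, p, A, B, b, C, D, c, rfl⟩ := h
  let inequalities := A.mulVecLin.coprod B.mulVecLin
  let equations := C.mulVecLin.coprod D.mulVecLin
  have hconv : Convex ℝ (inequalities ⁻¹' Set.Iic b ∩ equations ⁻¹' {c}) :=
    ((convex_Iic b).linear_preimage _).inter ((convex_singleton c).linear_preimage _)
  have hproj : {x | ∃ y, (∀ i, A.mulVec x i + B.mulVec y i ≤ b i) ∧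
      ∀ j, C.mulVec x j + D.mulVec y j = c j} =
      LinearMap.fst ℝ _ _ '' (inequalities ⁻¹' Set.Iic b ∩ equations ⁻¹' {c}) := by
    ext x
    constructor
    · rintro ⟨y, hle, heq⟩
      exact ⟨(x, y), ⟨hle, funext heq⟩, rfl⟩
    · rintro ⟨⟨x, y⟩, ⟨hle, heq⟩, rfl⟩
      exact ⟨y, hle, congr_fun heq⟩
  exact hproj ▸ hconv.linear_image _

theorem isExtFormulation_of_nonneg {κ W : Type*} [Fintype κ] [AddCommGroup W] [Module ℝ W]
    [FiniteDimensional ℝ W] (L : (ι → ℝ) × (κ → ℝ) →ₗ[ℝ] W) (c : W) :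
    IsExtFormulation {x | ∃ y, 0 ≤ y ∧ L (x, y) = c} (Fintype.card κ) := by
  classical
  let φ := (Module.finBasis ℝ W).equivFun
  let r : (Fin (Fintype.card κ) → ℝ) ≃ₗ[ℝ] (κ → ℝ) :=
    LinearEquiv.funCongrLeft ℝ ℝ (Fintype.equivFin κ)
  let C := φ.toLinearMap ∘ₗ L ∘ₗ LinearMap.inl ℝ _ _
  let D := φ.toLinearMap ∘ₗ L ∘ₗ LinearMap.inr ℝ _ _ ∘ₗ r.toLinearMap
  have hnonneg (y) : 0 ≤ r y ↔ 0 ≤ y :=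
    (Fintype.equivFin κ).forall_congr_left (p := fun i ↦ 0 ≤ r y i) |>.trans <| by
      simp [r, LinearMap.funLeft, Pi.le_def]
  have heq (x y) : C x + D y = φ c ↔ L (x, r y) = c := by
    have hL : L (x, r y) = L (x, 0) + L (0, r y) := by simp [← map_add]
    simp [C, D, hL, ← φ.injective.eq_iff]
  refine ⟨_, _, 0, -1, 0, LinearMap.toMatrix' C, LinearMap.toMatrix' D, φ c, ?_⟩
  ext x
  refine r.surjective.exists.trans (exists_congr fun y ↦ ?_)
  rw [hnonneg, ← heq]
  simp [Matrix.neg_mulVec, Pi.le_def, funext_iff]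

end ExtFormulation

section BasePolytope

variable {α : Type*}

theorem mem_convexHull_of_forall_exists_dotProduct_le [Fintype α] {S : Set (α → ℝ)} (hS : S.Finite)
    {x : α → ℝ} (h : ∀ w : α → ℝ, ∃ s ∈ S, w ⬝ᵥ s ≤ w ⬝ᵥ x) : x ∈ convexHull ℝ S := by
  classical
  by_contra hx
  obtain ⟨f, u, hfx, hfS⟩ := geometric_hahn_banach_point_closed (convex_convexHull ℝ S)
    (hS.isClosed_convexHull ℝ) hx
  obtain ⟨w, hw⟩ := (dotProductEquiv ℝ α).surjective f.toLinearMap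
  have hf (y : α → ℝ) : f y = w ⬝ᵥ y := (LinearMap.congr_fun hw y).symm
  obtain ⟨s, hsS, hs⟩ := h w
  have hus := hfS s (subset_convexHull ℝ S hsS)
  rw [hf] at hfx hus
  exact (hfx.trans hus).not_ge hs

variable (M : Matroid α)

/-- The base polytope of `M`: the convex hull of the characteristic vectors of its bases. -/
noncomputable def basePolytope : Set (α → ℝ) :=
  convexHull ℝ ((fun B : Set α ↦ B.indicator 1) '' {B | M.IsBase B})

variable {M} {x : α → ℝ}

/-- The greedy algorithm: the elements of `A` are inserted by increasing `w`, extending the basis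
each time. The weights are measured from an arbitrary upper bound `c` of `w` because, when `a` is
inserted, the induction hypothesis is needed at `c = w a`. -/
theorem exists_isBasis'_sum_mul_le (hx : ∀ A : Finset α, ∑ i ∈ A, x i ≤ (M.eRk A).toNat)
    (w : α → ℝ) (A : Finset α) :
    ∃ I : Finset α, M.IsBasis' I A ∧
      ∀ c, (∀ i ∈ A, w i ≤ c) → ∑ i ∈ A, (c - w i) * x i ≤ ∑ i ∈ I, (c - w i) := by
  classical
  induction A using Finset.induction_on_max_value w with
  | empty => exact ⟨∅, by simp [Matroid.isBasis'_iff_isBasis_inter_ground], by simp⟩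
  | insert a A haA hmax ih =>
    obtain ⟨I, hI, hle⟩ := ih
    obtain ⟨J, hJ, hIJ⟩ := hI.indep.subset_isBasis'_of_subset
      (hI.subset.trans (coe_subset.2 (subset_insert a A)))
    lift J to Finset α using (insert a A).finite_toSet.subset hJ.subset
    have hwJ : ∀ i ∈ J, w i ≤ w a := fun i hi ↦ by
      rcases mem_insert.1 (hJ.subset hi) with rfl | hiA
      exacts [le_rfl, hmax i hiA]
    refine ⟨J, hJ, fun c hc ↦ ?_⟩
    calc
      ∑ i ∈ insert a A, (c - w i) * x i
          = (c - w a) * ∑ i ∈ insert a A, x i + ∑ i ∈ insert a A, (w a - w i) * x i := by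
        rw [mul_sum, ← sum_add_distrib]
        exact sum_congr rfl fun i _ ↦ by ring
      _ = (c - w a) * ∑ i ∈ insert a A, x i + ∑ i ∈ A, (w a - w i) * x i := by
        simp [sum_insert haA]
      _ ≤ (c - w a) * #J + ∑ i ∈ J, (w a - w i) := by
        gcongr
        · exact sub_nonneg.2 (hc a (mem_insert_self a A))
        · have hJx := hx (insert a A)
          rwa [← hJ.encard_eq_eRk, Set.encard_coe_eq_coe_finsetCard, ENat.toNat_natCast] at hJx
        · exact (hle _ hmax).trans <| sum_le_sum_of_subset_of_nonneg (coe_subset.1 hIJ)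
            fun i hi _ ↦ sub_nonneg.2 (hwJ i hi)
      _ = ∑ i ∈ J, (c - w i) := by
        rw [mul_comm, ← nsmul_eq_mul, ← sum_const, ← sum_add_distrib]
        exact sum_congr rfl fun i _ ↦ by ring

theorem mem_basePolytope_of_sum_le_eRk [Fintype α]
    (hx : ∀ A : Finset α, ∑ i ∈ A, x i ≤ (M.eRk A).toNat) (hx' : ∑ i, x i = M.eRank.toNat) :
    x ∈ basePolytope M := by
  classical
  refine mem_convexHull_of_forall_exists_dotProduct_le (Set.toFinite _) fun w ↦ ?_
  obtain ⟨B, hB, hle⟩ := exists_isBasis'_sum_mul_le hx w univ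
  rw [coe_univ, Matroid.isBasis'_iff_isBasis_inter_ground, Set.univ_inter,
    Matroid.isBasis_ground_iff] at hB
  obtain ⟨c, hc⟩ := (Set.finite_range w).bddAbove
  have hcard : ∑ i, x i = #B := by simp [hx', ← hB.encard_eq_eRank]
  have hsum := hle c fun i _ ↦ hc ⟨i, rfl⟩
  simp only [sub_mul, sum_sub_distrib, ← mul_sum, hcard, sum_const, nsmul_eq_mul] at hsum
  refine ⟨_, ⟨B, hB, rfl⟩, ?_⟩
  have hwB : w ⬝ᵥ (B : Set α).indicator 1 = ∑ i ∈ B, w i := by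
    simp [dotProduct, Set.indicator_apply]
  rw [hwB, dotProduct]
  linarith

end BasePolytope

section CycleMatroid

variable {V : Type*} {G : SimpleGraph V} {I J : Set G.edgeSet} {u v : V}

/-- The subgraph of `G` on all of `V` with edge set `I`. -/
def edgeSubgraph (I : Set G.edgeSet) : SimpleGraph V :=
  fromEdgeSet ((↑) '' I)

theorem edgeSet_edgeSubgraph (I : Set G.edgeSet) : (edgeSubgraph I).edgeSet = (↑) '' I := by
  rw [edgeSubgraph, edgeSet_fromEdgeSet, sdiff_eq_left, Set.disjoint_left]
  rintro _ ⟨e, -, rfl⟩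
  exact G.not_isDiag_of_mem_edgeSet e.2

theorem edgeSubgraph_adj (h : G.Adj u v) : (edgeSubgraph I).Adj u v ↔ ⟨s(u, v), h⟩ ∈ I := by
  rw [← mem_edgeSet, edgeSet_edgeSubgraph]
  exact Subtype.val_injective.mem_set_image (a := (⟨s(u, v), h⟩ : G.edgeSet))

theorem edgeSubgraph_le (I : Set G.edgeSet) : edgeSubgraph I ≤ G := by
  simp [← edgeSet_subset_edgeSet, edgeSet_edgeSubgraph]

theorem edgeSubgraph_le_edgeSubgraph : edgeSubgraph I ≤ edgeSubgraph J ↔ I ⊆ J := by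
  rw [← edgeSet_subset_edgeSet, edgeSet_edgeSubgraph, edgeSet_edgeSubgraph,
    Set.image_subset_image_iff Subtype.val_injective]

theorem edgeSubgraph_insert (h : G.Adj u v) :
    edgeSubgraph (insert ⟨s(u, v), h⟩ I) = edgeSubgraph I ⊔ edge u v := by
  rw [edgeSubgraph, edgeSubgraph, edge, ← fromEdgeSet_union, Set.image_insert_eq,
    Set.union_singleton]

theorem exists_edgeSubgraph_eq {H : SimpleGraph V} (h : H ≤ G) :
    ∃ I : Set G.edgeSet, edgeSubgraph I = H := by
  refine ⟨(↑) ⁻¹' H.edgeSet, edgeSet_injective ?_⟩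
  simpa [edgeSet_edgeSubgraph] using h

theorem maximal_isAcyclic_edgeSubgraph_iff :
    Maximal (fun I : Set G.edgeSet ↦ (edgeSubgraph I).IsAcyclic) I ↔
      Maximal (fun H ↦ H ≤ G ∧ H.IsAcyclic) (edgeSubgraph I) := by
  refine ⟨fun h ↦ ⟨⟨edgeSubgraph_le I, h.prop⟩, ?_⟩, fun h ↦ ⟨h.prop.2, fun J hJ hIJ ↦ ?_⟩⟩
  · rintro H ⟨hHG, hH⟩ hIH
    obtain ⟨J, rfl⟩ := exists_edgeSubgraph_eq hHG
    exact edgeSubgraph_le_edgeSubgraph.2 (h.2 hH (edgeSubgraph_le_edgeSubgraph.1 hIH))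
  · exact edgeSubgraph_le_edgeSubgraph.1
      (h.2 ⟨edgeSubgraph_le J, hJ⟩ (edgeSubgraph_le_edgeSubgraph.2 hIJ))

theorem exists_isAcyclic_edgeSubgraph_insert {B : Set G.edgeSet} (hI : (edgeSubgraph I).IsAcyclic)
    (hI' : ¬Maximal (fun I : Set G.edgeSet ↦ (edgeSubgraph I).IsAcyclic) I)
    (hB : Maximal (fun I : Set G.edgeSet ↦ (edgeSubgraph I).IsAcyclic) B) :
    ∃ e ∈ B \ I, (edgeSubgraph (insert e I)).IsAcyclic := by
  obtain ⟨F, hIF, hFU, hF, hreach⟩ := exists_isAcyclic_reachable_eq_le_of_le_of_isAcyclic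
    (edgeSubgraph_le_edgeSubgraph.2 (Set.subset_union_left (t := B))) hI
  obtain ⟨J, rfl⟩ := exists_edgeSubgraph_eq (hFU.trans (edgeSubgraph_le _))
  rw [edgeSubgraph_le_edgeSubgraph] at hIF hFU
  have hBreach := (maximal_isAcyclic_iff_reachable_eq (edgeSubgraph_le B) hB.prop).1
    (maximal_isAcyclic_edgeSubgraph_iff.1 hB)
  have hJreach : (edgeSubgraph J).Reachable = G.Reachable := by
    ext a b
    refine ⟨fun h ↦ h.mono (edgeSubgraph_le J), fun h ↦ ?_⟩
    rw [← hBreach] at h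
    rw [hreach]
    exact h.mono (edgeSubgraph_le_edgeSubgraph.2 Set.subset_union_right)
  have hJ : Maximal (fun I : Set G.edgeSet ↦ (edgeSubgraph I).IsAcyclic) J :=
    maximal_isAcyclic_edgeSubgraph_iff.2
      ((maximal_isAcyclic_iff_reachable_eq (edgeSubgraph_le J) hF).2 hJreach)
  obtain ⟨e, heJ, heI⟩ := Set.not_subset.1 fun h : J ⊆ I ↦ hI' (hIF.antisymm h ▸ hJ)
  exact ⟨e, ⟨(hFU heJ).resolve_left heI, heI⟩,
    hF.anti (edgeSubgraph_le_edgeSubgraph.2 (Set.insert_subset heJ hIF))⟩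

variable [Finite V]

variable (G) in
/-- The cycle matroid of `G`, on the edges of `G`: a set of edges is independent if it contains no
cycle. -/
def cycleMatroid : Matroid G.edgeSet :=
  (IndepMatroid.ofBdd Set.univ (fun I ↦ (edgeSubgraph I).IsAcyclic)
    (by simp [edgeSubgraph, isAcyclic_bot])
    (fun _ _ hJ hIJ ↦ hJ.anti (edgeSubgraph_le_edgeSubgraph.2 hIJ))
    (fun _ _ ↦ exists_isAcyclic_edgeSubgraph_insert)
    (fun _ _ ↦ Set.subset_univ _)
    ⟨Nat.card G.edgeSet, fun I _ ↦ by
      simpa [Set.encard_univ, ENat.card_eq_coe_natCard] using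
        Set.encard_le_encard I.subset_univ⟩).matroid

theorem cycleMatroid_indep_iff : (cycleMatroid G).Indep I ↔ (edgeSubgraph I).IsAcyclic :=
  Iff.rfl

theorem cycleMatroid_isBase_iff (hG : G.Connected) :
    (cycleMatroid G).IsBase I ↔ (edgeSubgraph I).IsTree := by
  rw [Matroid.isBase_iff_maximal_indep, ← hG.maximal_le_isAcyclic_iff_isTree (edgeSubgraph_le I),
    ← maximal_isAcyclic_edgeSubgraph_iff]
  rfl

theorem toNat_eRank_cycleMatroid (hG : G.Connected) :
    (cycleMatroid G).eRank.toNat = Nat.card V - 1 := by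
  obtain ⟨B, hB⟩ := (cycleMatroid G).exists_isBase
  have hcard := (isTree_iff_connected_and_card.1 ((cycleMatroid_isBase_iff hG).1 hB)).2
  rw [edgeSet_edgeSubgraph, Nat.card_image_of_injective Subtype.val_injective] at hcard
  rw [← hB.encard_eq_eRank, ← hcard, Nat.add_sub_cancel]
  rfl

theorem reachable_edgeSubgraph_of_isBasis' {A : Set G.edgeSet} (hI : (cycleMatroid G).IsBasis' I A)
    (h : G.Adj u v) (hA : ⟨s(u, v), h⟩ ∈ A) : (edgeSubgraph I).Reachable u v := by
  by_contra huv
  have hins : (cycleMatroid G).Indep (insert ⟨s(u, v), h⟩ I) := by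
    rw [cycleMatroid_indep_iff, edgeSubgraph_insert]
    exact (cycleMatroid_indep_iff.1 hI.indep).sup_edge_of_not_reachable huv
  exact huv ((edgeSubgraph_adj h).2 (hI.mem_of_insert_indep hA hins)).reachable

end CycleMatroid

section Distance

variable {V : Type*} {H T : SimpleGraph V} {k u v : V}

theorem exists_adj_dist_eq_add_one (h : H.Reachable v k) (hv : v ≠ k) :
    ∃ w, H.Adj v w ∧ H.dist v k = H.dist w k + 1 := by
  obtain ⟨p, hp⟩ := h.exists_walk_length_eq_dist
  cases p with
  | nil => exact (hv rfl).elim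
  | @cons _ w _ hvw p =>
    rw [Walk.length_cons] at hp
    have hle := dist_le p
    have hge := hvw.diff_dist_adj (u := k)
    rw [dist_comm (u := k), dist_comm (u := k)] at hge
    exact ⟨w, hvw, by omega⟩

theorem existsUnique_adj_dist_eq_add_one (hT : T.IsTree) (hv : v ≠ k) :
    ∃! w, T.Adj v w ∧ T.dist v k = T.dist w k + 1 := by
  refine existsUnique_of_exists_of_unique
    (exists_adj_dist_eq_add_one (hT.connected v k) hv) fun w w' ⟨hw, hd⟩ ⟨hw', hd'⟩ ↦ ?_
  have exists_isPath_snd_eq {w : V} (hw : T.Adj v w) (hd : T.dist v k = T.dist w k + 1) :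
      ∃ p : T.Walk v k, p.IsPath ∧ p.snd = w := by
    obtain ⟨p, hp⟩ := hT.connected.exists_walk_length_eq_dist w k
    exact ⟨p.cons hw, Walk.isPath_of_length_eq_dist _ (by rw [Walk.length_cons, hp, hd]),
      p.snd_cons hw⟩
  obtain ⟨p, hp, rfl⟩ := exists_isPath_snd_eq hw hd
  obtain ⟨p', hp', rfl⟩ := exists_isPath_snd_eq hw' hd'
  rw [(hT.existsUnique_path v k).unique hp hp']

/-- A representative of the connected component of `v`, the same for all vertices of the
component. -/
noncomputable def componentRep (H : SimpleGraph V) (v : V) : V :=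
  (H.connectedComponentMk v).out

theorem reachable_componentRep (H : SimpleGraph V) (v : V) : H.Reachable v (componentRep H v) :=
  ConnectedComponent.exact (Quot.out_eq _).symm

theorem componentRep_eq (h : H.Reachable u v) : componentRep H u = componentRep H v :=
  congrArg Quot.out (ConnectedComponent.sound h)

theorem ncard_componentRep_ne_le (hH : H.edgeSet.Finite) :
    {v | componentRep H v ≠ v}.ncard ≤ H.edgeSet.ncard := by
  have exists_closer (v : V) (hv : componentRep H v ≠ v) :
      ∃ w, H.Adj v w ∧ H.dist v (componentRep H v) = H.dist w (componentRep H v) + 1 :=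
    exists_adj_dist_eq_add_one (reachable_componentRep H v) hv.symm
  choose! next hnext using exists_closer
  refine Set.ncard_le_ncard_of_injOn (fun v ↦ s(v, next v)) (fun v hv ↦ (hnext v hv).1)
    (fun v hv v' hv' heq ↦ ?_) hH
  obtain ⟨hadj, hdist⟩ := hnext v hv
  have hdist' := (hnext v' hv').2
  rcases Sym2.eq_iff.1 heq with ⟨h, -⟩ | ⟨h, h'⟩
  · exact h
  · rw [h'] at hadj hdist
    rw [← h, ← componentRep_eq hadj.reachable] at hdist'
    omega

open Classical in
/-- The weight of the dart from `u` to `v` when the tree `T` is oriented towards `k`: the solution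
of Martin's system that comes from a spanning tree `T`. -/
noncomputable def orientToward (T : SimpleGraph V) (k u v : V) : ℝ :=
  if T.Adj u v ∧ T.dist u k = T.dist v k + 1 then 1 else 0

open Classical in
theorem orientToward_add_orientToward (hT : T.IsTree) (k u v : V) :
    orientToward T k u v + orientToward T k v u = if T.Adj u v then 1 else 0 := by
  by_cases huv : T.Adj u v
  · have hdist := hT.dist_eq_dist_add_one_of_adj k huv
    rw [dist_comm (u := k), dist_comm (u := k)] at hdist
    simp only [orientToward, huv, huv.symm, true_and, if_true]
    rcases hdist with h | h
    · rw [if_pos h, if_neg (by omega), add_zero]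
    · rw [if_neg (by omega), if_pos h, zero_add]
  · simp [orientToward, huv, T.adj_comm v u]

end Distance

section Martin

variable {V : Type*} [Fintype V] [DecidableEq V] {G : SimpleGraph V} [DecidableRel G.Adj]

/-- The edge underlying a dart of `G`, as an index of a coordinate of `ℝ^E`. -/
def dartEdge (d : G.Dart) : G.edgeSet :=
  ⟨d.edge, d.edge_mem⟩

theorem sum_filter_dartEdge_eq (f : G.Dart → ℝ) (d : G.Dart) :
    ∑ d' with dartEdge d' = dartEdge d, f d' = f d + f d.symm := by
  simp only [dartEdge, Subtype.mk_eq_mk, Dart.edge_fiber, sum_pair (Dart.symm_ne d).symm]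

/-- Martin's linear system: for each root `k`, the weight of every edge is split among its two
darts so that `k` emits nothing and every other vertex emits total weight one. -/
structure IsMartinSolution (x : G.edgeSet → ℝ) (z : V × G.Dart → ℝ) : Prop where
  nonneg : 0 ≤ z
  add_symm (k d) : z (k, d) + z (k, d.symm) = x (dartEdge d)
  sum_fst (k v) : ∑ d with d.fst = v, z (k, d) = if v = k then 0 else 1

variable {x : G.edgeSet → ℝ} {z : V × G.Dart → ℝ}

theorem IsMartinSolution.sum_dart (h : IsMartinSolution x z) (ρ : V → V) :
    ∑ d : G.Dart, z (ρ d.fst, d) = #{v | ρ v ≠ v} := by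
  calc
    ∑ d : G.Dart, z (ρ d.fst, d) = ∑ v, ∑ d with d.fst = v, z (ρ d.fst, d) :=
      (sum_fiberwise _ _ _).symm
    _ = ∑ v, ∑ d with d.fst = v, z (ρ v, d) :=
      sum_congr rfl fun v _ ↦ sum_congr rfl fun d hd ↦ by rw [(mem_filter.1 hd).2]
    _ = #{v | ρ v ≠ v} := by
      simp [h.sum_fst, sum_ite, eq_comm (b := ρ _)]

theorem IsMartinSolution.sum_eq_sum_dart (h : IsMartinSolution x z) {A : Finset G.edgeSet}
    {ρ : V → V} (hρ : ∀ d, dartEdge d ∈ A → ρ d.fst = ρ d.snd) :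
    ∑ e ∈ A, x e = ∑ d with dartEdge d ∈ A, z (ρ d.fst, d) := by
  rw [← sum_fiberwise_eq_sum_filter]
  refine sum_congr rfl fun ⟨e, he⟩ heA ↦ ?_
  induction e with
  | h u v =>
    let d : G.Dart := ⟨(u, v), he⟩
    change x (dartEdge d) = ∑ d' with dartEdge d' = dartEdge d, z (ρ d'.fst, d')
    rw [sum_filter_dartEdge_eq, ← h.add_symm (ρ d.fst), hρ d heA]
    rfl

theorem IsMartinSolution.sum_le_eRk (h : IsMartinSolution x z) (A : Finset G.edgeSet) :
    ∑ e ∈ A, x e ≤ ((cycleMatroid G).eRk A).toNat := by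
  classical
  obtain ⟨I, hI⟩ := (cycleMatroid G).exists_isBasis' A
  let ρ := componentRep (edgeSubgraph I)
  have hρ (d : G.Dart) (hd : dartEdge d ∈ A) : ρ d.fst = ρ d.snd :=
    componentRep_eq (reachable_edgeSubgraph_of_isBasis' hI d.adj hd)
  have hrank : #{v | ρ v ≠ v} ≤ ((cycleMatroid G).eRk A).toNat := by
    have hle := ncard_componentRep_ne_le (edgeSubgraph I).edgeSet.toFinite
    rw [edgeSet_edgeSubgraph, Set.ncard_image_of_injective _ Subtype.val_injective] at hle
    rw [← hI.encard_eq_eRk, ← Set.ncard_def, ← Set.ncard_coe_finset, coe_filter_univ]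
    exact hle
  calc
    ∑ e ∈ A, x e = ∑ d with dartEdge d ∈ A, z (ρ d.fst, d) := h.sum_eq_sum_dart hρ
    _ ≤ ∑ d, z (ρ d.fst, d) :=
      sum_le_sum_of_subset_of_nonneg (filter_subset _ _) fun d _ _ ↦ h.nonneg _
    _ = #{v | ρ v ≠ v} := h.sum_dart ρ
    _ ≤ ((cycleMatroid G).eRk A).toNat := by exact_mod_cast hrank

theorem IsMartinSolution.sum_eq_eRank (h : IsMartinSolution x z) (hG : G.Connected) :
    ∑ e, x e = (cycleMatroid G).eRank.toNat := by
  obtain ⟨k⟩ := hG.nonempty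
  calc
    ∑ e, x e = ∑ d, z (k, d) := by
      simpa using h.sum_eq_sum_dart (A := univ) (ρ := fun _ ↦ k) fun _ _ ↦ rfl
    _ = #{v | k ≠ v} := h.sum_dart fun _ ↦ k
    _ = (cycleMatroid G).eRank.toNat := by
      rw [toNat_eRank_cycleMatroid hG, Nat.card_eq_fintype_card, filter_ne,
        card_erase_of_mem (mem_univ k), card_univ]

theorem sum_orientToward {T : SimpleGraph V} (hT : T.IsTree) (hTG : T ≤ G) (k v : V) :
    ∑ d : G.Dart with d.fst = v, orientToward T k d.fst d.snd = if v = k then 0 else 1 := by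
  split_ifs with hv
  · subst hv
    refine sum_eq_zero fun d hd ↦ ?_
    simp [orientToward, (mem_filter.1 hd).2]
  · obtain ⟨w, ⟨hvw, hw⟩, huniq⟩ := existsUnique_adj_dist_eq_add_one hT hv
    rw [sum_eq_single ⟨(v, w), hTG hvw⟩]
    · exact if_pos ⟨hvw, hw⟩
    · rintro ⟨⟨a, b⟩, hab⟩ ha hne
      obtain rfl : a = v := by simpa using ha
      refine if_neg fun hb ↦ hne ?_
      obtain rfl := huniq b hb
      rfl
    · simp

theorem isMartinSolution_orientToward {I : Set G.edgeSet} (hI : (edgeSubgraph I).IsTree) :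
    IsMartinSolution (I.indicator 1)
      (fun p ↦ orientToward (edgeSubgraph I) p.1 p.2.fst p.2.snd) where
  nonneg p := by
    unfold orientToward
    positivity
  add_symm k d := by
    classical
    simp only [Dart.symm, Prod.fst_swap, Prod.snd_swap, orientToward_add_orientToward hI,
      edgeSubgraph_adj d.adj, Set.indicator_apply, Pi.one_apply]
    rfl
  sum_fst := sum_orientToward hI (edgeSubgraph_le I)

end Martin

section SpanningTreePolytope

variable {V : Type} {G : SimpleGraph V}

theorem stp_eq_basePolytope [Finite V] (hG : G.Connected) :
    stp G = basePolytope (cycleMatroid G) := by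
  classical
  have hindicator (B : Set G.edgeSet) :
      (fun e : G.edgeSet ↦ ((↑) '' B : Set (Sym2 V)).indicator (1 : Sym2 V → ℝ) e) =
        B.indicator 1 := by
    ext e
    simp only [Set.indicator_apply, Subtype.val_injective.mem_set_image, Pi.one_apply]
  refine congrArg (convexHull ℝ) (Set.ext fun x ↦ ⟨?_, ?_⟩)
  · rintro ⟨T, ⟨hTG, hT⟩, rfl⟩
    lift T to Set G.edgeSet using hTG
    exact ⟨T, (cycleMatroid_isBase_iff hG).2 hT, (hindicator T).symm⟩
  · rintro ⟨B, hB, rfl⟩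
    have hT : (edgeSubgraph B).IsTree := (cycleMatroid_isBase_iff hG).1 hB
    exact ⟨Subtype.val '' B, ⟨by simp, hT⟩, (hindicator B).symm⟩

variable [Fintype V] [DecidableEq V] [DecidableRel G.Adj]

variable (G) in
theorem isExtFormulation_isMartinSolution :
    IsExtFormulation {x : G.edgeSet → ℝ | ∃ z, IsMartinSolution x z}
      (Fintype.card (V × G.Dart)) := by
  let L : (G.edgeSet → ℝ) × (V × G.Dart → ℝ) →ₗ[ℝ] (V → G.Dart → ℝ) × (V → V → ℝ) :=
    { toFun p := (fun k d ↦ p.2 (k, d) + p.2 (k, d.symm) - p.1 (dartEdge d),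
        fun k v ↦ ∑ d with d.fst = v, p.2 (k, d))
      map_add' p q := by
        ext <;> simp [sum_add_distrib]
        ring
      map_smul' a p := by
        ext <;> simp [mul_sum]
        ring }
  convert isExtFormulation_of_nonneg L (0, fun k v ↦ if v = k then 0 else 1) using 5 with x z
  simp only [L, LinearMap.coe_mk, AddHom.coe_mk, Prod.mk.injEq, funext_iff, Pi.zero_apply,
    sub_eq_zero]
  exact ⟨fun h ↦ ⟨h.nonneg, h.add_symm, h.sum_fst⟩, fun ⟨h, h', h''⟩ ↦ ⟨h, h', h''⟩⟩

theorem stp_eq_setOf_isMartinSolution (hG : G.Connected) :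
    stp G = {x | ∃ z, IsMartinSolution x z} := by
  rw [stp_eq_basePolytope hG]
  refine subset_antisymm (convexHull_min ?_ ?_) ?_
  · rintro _ ⟨B, hB, rfl⟩
    exact ⟨_, isMartinSolution_orientToward ((cycleMatroid_isBase_iff hG).1 hB)⟩
  · exact convex_of_isExtFormulation (isExtFormulation_isMartinSolution G)
  · rintro x ⟨z, hz⟩
    exact mem_basePolytope_of_sum_le_eRk hz.sum_le_eRk (hz.sum_eq_eRank hG)

end SpanningTreePolytope

/-- **Wong, Martin.** For every finite connected simple graph `G = (V, E)`,
the extension complexity of the spanning tree polytope of `G` is `O(|V| · |E|)`: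
there is a universal constant `C > 0` such that `xc(STP(G)) ≤ C · |V| · |E|`
for every finite connected simple graph `G`. -/
theorem xc_stp_le_card_mul_card :
    ∃ C : ℝ, 0 < C ∧
      ∀ (V : Type) [Fintype V] [DecidableEq V] (G : SimpleGraph V) [DecidableRel G.Adj],
        G.Connected →
        (xc (stp G) : ℝ) ≤ C * (Fintype.card V : ℝ) * (G.edgeFinset.card : ℝ) := by
  refine ⟨2, two_pos, fun V _ _ G _ hG ↦ ?_⟩
  have h := xc_le_of_isExtFormulation (isExtFormulation_isMartinSolution G)
  rw [← stp_eq_setOf_isMartinSolution hG, Fintype.card_prod, dart_card_eq_twice_card_edges] at h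
  calc
    (xc (stp G) : ℝ) ≤ (Fintype.card V * (2 * #G.edgeFinset) : ℕ) := by exact_mod_cast h
    _ = 2 * (Fintype.card V : ℝ) * (#G.edgeFinset : ℝ) := by
      push_cast
      ring
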